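/- Let n = 4, let α_1, α_2, α_3, α_4 ∈ ℝ (indices mod 4) satisfy sin(α_{j+1} − α_j) ≠ 0 for all j, let P_θ be the associated 4×4 perpendicular-bisector evolute matrix, and let C, S ∈ ℝ⁴ be given by C_j = cos α_j, S_j = sin α_j. Then there exists λ ∈ ℝ such that for every p ∈ ℝ⁴, P_θ²·p − λ·p ∈ span{C, S}. Geometrically: the second perpendicular-bisector evolute of any quadrilateral is homothetic to the quadrilateral itself, with ratio depending only on the angles. -/

import Mathlib

open Real

/-- The perpendicular-bisector evolute matrix `P_θ` associated with the cyclic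
sequence of normal angles `α`. -/
noncomputable def Pmat (n : ℕ) [NeZero n] (α : Fin n → ℝ) : Matrix (Fin n) (Fin n) ℝ :=
  Matrix.of fun j k =>
    if k = j then
      (Real.cos (α j - α (j - 1)) / Real.sin (α j - α (j - 1)) -
        Real.cos (α (j + 1) - α j) / Real.sin (α (j + 1) - α j)) / 2
    else if k = j + 1 then 1 / (2 * Real.sin (α (j + 1) - α j))
    else if k = j - 1 then -(1 / (2 * Real.sin (α j - α (j - 1))))
    else 0

/-!
`P_θ` maps the support vector `(cos (α_j + φ))_j` of a unit translation to `(-sin (α_j + φ))_j`, so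
it acts on the plane `W = span {C, S}` as a quarter turn, which has trace zero.
The diagonal of `P_θ` telescopes around the cycle, so `P_θ` has trace zero too. For `n = 4` the
endomorphism induced on `ℝ⁴ / W` is therefore a traceless endomorphism of a plane, and by
Cayley–Hamilton its square is a scalar.
-/

open Matrix Module

section InvariantSubmodule

variable {R M : Type*} [CommRing R] [AddCommGroup M] [Module R M]

theorem trace_eq_trace_restrict_add_trace_mapQ [Module.Finite R M] (W : Submodule R M)
    [Free R W] [Module.Finite R W] [Free R (M ⧸ W)] (f : M →ₗ[R] M) (hf : W ≤ W.comap f) :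
    LinearMap.trace R M f =
      LinearMap.trace R W (f.restrict hf) + LinearMap.trace R (M ⧸ W) (W.mapQ W f hf) := by
  let bW := Free.chooseBasis R W
  let bQ := Free.chooseBasis R (M ⧸ W)
  rw [LinearMap.trace_eq_matrix_trace R (Basis.sumQuot bW bQ),
    LinearMap.trace_eq_matrix_trace R bW, LinearMap.trace_eq_matrix_trace R bQ]
  simp only [Matrix.trace, Matrix.diag_apply, Fintype.sum_sum_type, LinearMap.toMatrix_apply]
  congr 1 <;> refine Finset.sum_congr rfl fun i _ ↦ ?_
  · rw [Basis.sumQuot_inl]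
    exact Basis.sumQuot_repr_inl_of_mem bW bQ _ (hf (bW i).2) i
  · rw [Basis.sumQuot_repr_inr, ← Basis.sumQuot_inr bW bQ i, Submodule.mapQ_apply,
      Submodule.mkQ_apply]

theorem trace_restrict_span_range {ι : Type*} [Fintype ι] {f : M →ₗ[R] M} {v : ι → M}
    (hv : LinearIndependent R v) {A : Matrix ι ι R} (hA : ∀ j, f (v j) = ∑ i, A i j • v i)
    (hf : Submodule.span R (Set.range v) ≤ (Submodule.span R (Set.range v)).comap f) :
    LinearMap.trace R _ (f.restrict hf) = A.trace := by
  classical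
  have hrestrict (j) : f.restrict hf (Basis.span hv j) = ∑ i, A i j • Basis.span hv i := by
    ext
    simp [Basis.span_apply, hA]
  have htoMatrix : LinearMap.toMatrix (Basis.span hv) (Basis.span hv) (f.restrict hf) = A := by
    ext i j
    rw [LinearMap.toMatrix_apply, hrestrict, Basis.repr_sum_self]
  rw [LinearMap.trace_eq_matrix_trace R (Basis.span hv), htoMatrix]

theorem sq_eq_trace_smul_sub_det_smul_one [Free R M] [Module.Finite R M]
    (hM : finrank R M = 2) (f : End R M) :
    f ^ 2 = LinearMap.trace R M f • f - LinearMap.det f • 1 := by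
  rcases subsingleton_or_nontrivial R with _ | _
  · have := Module.subsingleton R M
    exact Subsingleton.elim _ _
  let b := Free.chooseBasis R M
  have hcard : Fintype.card (Free.ChooseBasisIndex R M) = 2 := by
    rw [← finrank_eq_card_chooseBasisIndex, hM]
  have hcayley := f.aeval_self_charpoly
  rw [← f.charpoly_toMatrix b, charpoly_of_card_eq_two _ hcard,
    ← LinearMap.trace_eq_matrix_trace, LinearMap.det_toMatrix] at hcayley
  simp only [map_add, map_sub, map_mul, map_pow, Polynomial.aeval_X, Polynomial.aeval_C,
    Algebra.algebraMap_eq_smul_one, smul_mul_assoc, one_mul] at hcayley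
  rw [← sub_eq_zero, ← hcayley]
  abel

theorem exists_forall_sq_sub_smul_mem [Module.Finite R M] (W : Submodule R M)
    [Free R W] [Module.Finite R W] [Free R (M ⧸ W)] (hW : finrank R (M ⧸ W) = 2)
    (f : M →ₗ[R] M) (hf : W ≤ W.comap f)
    (htrace : LinearMap.trace R M f = LinearMap.trace R W (f.restrict hf)) :
    ∃ c : R, ∀ x, f (f x) - c • x ∈ W := by
  have hquot : LinearMap.trace R (M ⧸ W) (W.mapQ W f hf) = 0 := by
    simpa [htrace] using trace_eq_trace_restrict_add_trace_mapQ W f hf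
  have hsq := sq_eq_trace_smul_sub_det_smul_one hW (W.mapQ W f hf)
  refine ⟨-LinearMap.det (W.mapQ W f hf), fun x ↦ (Submodule.Quotient.mk_eq_zero W).1 ?_⟩
  have hx := LinearMap.congr_fun hsq (Submodule.Quotient.mk x)
  rw [hquot, sq] at hx
  simpa [eq_neg_iff_add_eq_zero] using hx

theorem exists_forall_sq_sub_smul_mem_span_range {K V ι : Type*} [Field K] [AddCommGroup V]
    [Module K V] [Fintype ι] {f : V →ₗ[K] V} {v : ι → V}
    (hv : LinearIndependent K v) {A : Matrix ι ι K} (hA : ∀ j, f (v j) = ∑ i, A i j • v i)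
    (htrace : LinearMap.trace K V f = A.trace) (hdim : finrank K V = Fintype.card ι + 2) :
    ∃ c : K, ∀ x, f (f x) - c • x ∈ Submodule.span K (Set.range v) := by
  have : FiniteDimensional K V := FiniteDimensional.of_finrank_pos (by lia)
  have hf : Submodule.span K (Set.range v) ≤ (Submodule.span K (Set.range v)).comap f := by
    rw [Submodule.span_le]
    rintro _ ⟨j, rfl⟩
    rw [SetLike.mem_coe, Submodule.mem_comap, hA]
    exact sum_mem fun i _ ↦ Submodule.smul_mem _ _ (Submodule.subset_span ⟨i, rfl⟩)
  refine exists_forall_sq_sub_smul_mem _ ?_ f hf (htrace.trans ?_)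
  · rw [Submodule.finrank_quotient, finrank_span_eq_card hv, hdim, Nat.add_sub_cancel_left]
  · exact (trace_restrict_span_range hv hA hf).symm

end InvariantSubmodule

theorem linearIndependent_cos_sin {ι : Type*} {α : ι → ℝ} {i j : ι} (h : sin (α j - α i) ≠ 0) :
    LinearIndependent ℝ ![fun k ↦ cos (α k), fun k ↦ sin (α k)] := by
  rw [LinearIndependent.pair_iff]
  intro a b hab
  have hi : a * cos (α i) + b * sin (α i) = 0 := congrFun hab i
  have hj : a * cos (α j) + b * sin (α j) = 0 := congrFun hab j
  rw [sin_sub] at h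
  constructor <;> refine (mul_eq_zero_iff_right h).1 ?_
  · linear_combination sin (α j) * hi - sin (α i) * hj
  · linear_combination cos (α i) * hj - cos (α j) * hi

section Pmat

variable {n : ℕ} [NeZero n] {α : Fin n → ℝ}

theorem trace_Pmat : (Pmat n α).trace = 0 := by
  let c (j : Fin n) : ℝ := cos (α (j + 1) - α j) / sin (α (j + 1) - α j)
  have hdiag (j) : Pmat n α j j = (c (j - 1) - c j) / 2 := by simp [Pmat, c]
  have hshift : ∑ j, c (j - 1) = ∑ j, c j := (Equiv.subRight 1).sum_comp c
  simp only [Matrix.trace, diag_apply, hdiag]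
  rw [← Finset.sum_div, Finset.sum_sub_distrib, hshift, sub_self, zero_div]

theorem Pmat_mulVec_apply (hn : 2 < n) (p : Fin n → ℝ) (j : Fin n) :
    (Pmat n α *ᵥ p) j =
      (cos (α j - α (j - 1)) / sin (α j - α (j - 1)) -
        cos (α (j + 1) - α j) / sin (α (j + 1) - α j)) / 2 * p j +
      1 / (2 * sin (α (j + 1) - α j)) * p (j + 1) -
      1 / (2 * sin (α j - α (j - 1))) * p (j - 1) := by
  have hnext : j ≠ j + 1 := by
    simp [Fin.ext_iff, Nat.mod_eq_of_lt (one_lt_two.trans hn)]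
  have hprev : j ≠ j - 1 := by
    rw [Ne, eq_sub_iff_add_eq]
    exact hnext.symm
  have hnext_prev : j + 1 ≠ j - 1 := by
    rw [Ne, eq_sub_iff_add_eq, add_assoc, add_eq_left]
    simp [Fin.ext_iff, Fin.val_add, Nat.mod_eq_of_lt hn]
  have hsupport : ∑ k ∈ {j, j + 1, j - 1}, Pmat n α j k * p k = (Pmat n α *ᵥ p) j := by
    refine Finset.sum_subset (Finset.subset_univ _) fun k _ hk ↦ ?_
    simp only [Finset.mem_insert, Finset.mem_singleton, not_or] at hk
    simp [Pmat, hk]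
  rw [← hsupport, Finset.sum_insert (by simp [hnext, hprev]), Finset.sum_pair hnext_prev]
  simp only [Pmat, of_apply, if_true, hnext.symm, hprev.symm, hnext_prev.symm, if_false]
  ring

theorem cos_three_term_eq_neg_sin (x : ℝ) {s t : ℝ} (hs : sin s ≠ 0) (ht : sin t ≠ 0) :
    (cos s / sin s - cos t / sin t) / 2 * cos x + 1 / (2 * sin t) * cos (x + t) -
      1 / (2 * sin s) * cos (x - s) = -sin x := by
  rw [cos_add, cos_sub]
  field_simp
  ring

theorem Pmat_mulVec_cos_add (hn : 2 < n) (hsin : ∀ j, sin (α (j + 1) - α j) ≠ 0) (φ : ℝ) :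
    (Pmat n α *ᵥ fun j ↦ cos (α j + φ)) = fun j ↦ -sin (α j + φ) := by
  ext j
  have hprev : sin (α j - α (j - 1)) ≠ 0 := by simpa using hsin (j - 1)
  rw [Pmat_mulVec_apply hn, ← cos_three_term_eq_neg_sin (α j + φ) hprev (hsin j)]
  ring_nf

theorem Pmat_mulVec_cos (hn : 2 < n) (hsin : ∀ j, sin (α (j + 1) - α j) ≠ 0) :
    (Pmat n α *ᵥ fun j ↦ cos (α j)) = fun j ↦ -sin (α j) := by
  simpa using Pmat_mulVec_cos_add hn hsin 0

theorem Pmat_mulVec_sin (hn : 2 < n) (hsin : ∀ j, sin (α (j + 1) - α j) ≠ 0) :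
    (Pmat n α *ᵥ fun j ↦ sin (α j)) = fun j ↦ cos (α j) := by
  simpa [← sub_eq_add_neg, cos_sub_pi_div_two, sin_sub_pi_div_two] using
    Pmat_mulVec_cos_add hn hsin (-(π / 2))

end Pmat

/-- The second perpendicular-bisector evolute of any quadrilateral
is homothetic to the quadrilateral: there is `λ ∈ ℝ` (depending only on the angles)
such that `P_θ² p − λ p ∈ span{C, S}` for all support vectors `p`. -/
theorem stmt_11 (α : Fin 4 → ℝ)
    (hsin : ∀ j : Fin 4, Real.sin (α (j + 1) - α j) ≠ 0)
    (C S : Fin 4 → ℝ)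
    (hC : ∀ j : Fin 4, C j = Real.cos (α j))
    (hS : ∀ j : Fin 4, S j = Real.sin (α j)) :
    ∃ lam : ℝ, ∀ p : Fin 4 → ℝ,
      (Pmat 4 α).mulVec ((Pmat 4 α).mulVec p) - lam • p ∈
        Submodule.span ℝ ({C, S} : Set (Fin 4 → ℝ)) := by
  obtain rfl : C = fun j ↦ cos (α j) := funext hC
  obtain rfl : S = fun j ↦ sin (α j) := funext hS
  let v : Fin 2 → Fin 4 → ℝ := ![fun j ↦ cos (α j), fun j ↦ sin (α j)]
  let J : Matrix (Fin 2) (Fin 2) ℝ := !![0, 1; -1, 0]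
  have hrot : ∀ j, (Pmat 4 α).toLin' (v j) = ∑ i, J i j • v i := by
    simp [Fin.forall_fin_two, v, J, ← Pi.neg_def, Pmat_mulVec_cos, Pmat_mulVec_sin, hsin]
  have htrace : LinearMap.trace ℝ _ (Pmat 4 α).toLin' = J.trace := by
    simp [J, trace_Pmat, trace_fin_two]
  have hrange : Set.range v = {fun j ↦ cos (α j), fun j ↦ sin (α j)} := by
    simp [v, Set.pair_comm]
  have hdim : finrank ℝ (Fin 4 → ℝ) = Fintype.card (Fin 2) + 2 := by simp
  rw [← hrange]
  exact exists_forall_sq_sub_smul_mem_span_range (linearIndependent_cos_sin (hsin 0))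
    hrot htrace hdim
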